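/- Let (V, K, η) be a para-Hermitian vector space and B : V → V a linear map whose image lies in E₋, which vanishes on E₋, and which is η-skew: η(B u, v) = −η(u, B v) for all u, v ∈ V. Then B ∘ B = 0, the map e^B := id + B is invertible with inverse id − B, and K_B := e^B ∘ K ∘ e^{−B} satisfies K_B = K + 2B, K_B ∘ K_B = id, and η(K_B u, K_B v) = −η(u, v) for all u, v ∈ V; hence (K_B, η) is again a para-Hermitian structure on V. -/

import Mathlib

open Module

/-- A B-transformation `e^B = id + B` of a para-Hermitian vector space satisfies `B² = 0`,
is invertible with inverse `id − B`, and `K_B = e^B K e^{−B} = K + 2B` is again a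
para-Hermitian structure. -/
theorem stmt8 {V : Type*} [AddCommGroup V] [Module ℝ V] [FiniteDimensional ℝ V]
    (K : V →ₗ[ℝ] V) (hK : ∀ v, K (K v) = v)
    (heig : finrank ℝ (Module.End.eigenspace K 1) = finrank ℝ (Module.End.eigenspace K (-1)))
    (η : LinearMap.BilinForm ℝ V)
    (hsymm : ∀ u v, η u v = η v u)
    (hnondeg : ∀ u, (∀ v, η u v = 0) → u = 0)
    (hanti : ∀ u v, η (K u) (K v) = - η u v)
    (B : V →ₗ[ℝ] V)
    (hBrange : ∀ u, K (B u) = - B u)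
    (hBvanish : ∀ u, K u = - u → B u = 0)
    (hBskew : ∀ u v, η (B u) v = - η u (B v))
    (KB : V →ₗ[ℝ] V)
    (hKB : KB = (LinearMap.id + B) ∘ₗ K ∘ₗ (LinearMap.id - B)) :
    (∀ u, B (B u) = 0) ∧
    (LinearMap.id + B) ∘ₗ (LinearMap.id - B) = LinearMap.id ∧
    (LinearMap.id - B) ∘ₗ (LinearMap.id + B) = LinearMap.id ∧
    KB = K + (2 : ℝ) • B ∧
    (∀ v, KB (KB v) = v) ∧
    (∀ u v, η (KB u) (KB v) = - η u v) := by
  have hBB : ∀ u, B (B u) = 0 := fun u => hBvanish _ (hBrange u)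
  have hBK : ∀ u, B (K u) = B u := fun u => by
    have h : B (u - K u) = 0 := hBvanish _ (by rw [map_sub, hK, neg_sub])
    rw [map_sub, sub_eq_zero] at h
    exact h.symm
  have hKB_eq : KB = K + (2 : ℝ) • B := by
    ext u
    simp only [hKB, LinearMap.comp_apply, LinearMap.add_apply, LinearMap.sub_apply,
      LinearMap.id_apply, LinearMap.smul_apply, map_sub, map_neg, hBrange, hBK, hBB]
    module
  refine ⟨hBB, ?_, ?_, hKB_eq, fun v => ?_, fun u v => ?_⟩
  · ext u
    simp [hBB]
  · ext u
    simp [hBB]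
  · simp only [hKB_eq, LinearMap.add_apply, LinearMap.smul_apply, map_add, map_smul, hK,
      hBrange, hBK, hBB]
    module
  · have hBuBv : η (B u) (B v) = 0 := by rw [hBskew, hBB, map_zero, neg_zero]
    have hBuKv : η (B u) (K v) = - η u (B v) := by rw [hBskew, hBK]
    have hKuBv : η (K u) (B v) = η u (B v) := by
      rw [← neg_eq_iff_eq_neg.mpr (hBskew (K u) v), hBK, hBskew, neg_neg]
    simp only [hKB_eq, LinearMap.add_apply, LinearMap.smul_apply, map_add, map_smul,
      smul_eq_mul, hanti, hBuBv, hBuKv, hKuBv]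
    ring
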